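/- arXiv:1810.08664 — 7 statements merged into one kernel-verified Lean document; each statement's English description precedes it below -/
import Mathlib

section
/- Let C_n(ℓ;a) be a circulant graph with symmetric edge lengths ℓ_1,…,ℓ_d > 0, let k ∈ ℝ satisfy sin(kℓ_h) ≠ 0 for all h, let v be the symbol of the circulant matrix M(k) (so M(k)_{ij} = v(i−j)), and let ω = exp(2πi/n). Then for every integer j with 0 ≤ j ≤ ⌊n/2⌋, the eigenvalue ∑_{m=0}^{n−1} v(m) ω^{jm} equals p_j(k); explicitly: it equals 2∑_{h=1}^d tan(kℓ_h/2) when j = 0; it equals 2∑_{h=1}^d [−cot(kℓ_h) + cos(2πja_h/n)·csc(kℓ_h)] when 1 ≤ j ≤ ⌊(n−1)/2⌋; and, when n is even and j = n/2, it equals 2[∑_{h: a_h even} tan(kℓ_h/2) − ∑_{h: a_h odd} cot(kℓ_h/2)]. -/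
open Finset

/-- The secular matrix `M(k)` of the quantum circulant graph `C_n(ℓ; a)` with
symmetric edge lengths. -/
noncomputable def Mmat (n d : ℕ) (a : Fin d → ℕ) (ℓ : Fin d → ℝ) (k : ℝ) :
    Matrix (ZMod n) (ZMod n) ℝ :=
  fun i j =>
    if i = j then -2 * ∑ h : Fin d, Real.cos (k * ℓ h) / Real.sin (k * ℓ h)
    else ∑ h : Fin d,
      if i - j = (a h : ZMod n) ∨ i - j = -(a h : ZMod n)
        then 1 / Real.sin (k * ℓ h) else 0

lemma cast_inj_lt (n x y : ℕ) (hx : x < n) (hy : y < n) :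
    ((x : ZMod n) = (y : ZMod n)) ↔ x = y := by
  rw [ZMod.natCast_eq_natCast_iff', Nat.mod_eq_of_lt hx, Nat.mod_eq_of_lt hy]

lemma symbol_eq (n d : ℕ) [NeZero n] (a : Fin d → ℕ)
    (hpos : ∀ h, 0 < a h) (hlt : ∀ h, 2 * a h < n)
    (ℓ : Fin d → ℝ) (k : ℝ)
    (v : ZMod n → ℝ) (hv : ∀ i j, Mmat n d a ℓ k i j = v (i - j)) (m : ℕ) (hm : m < n) :
    v (m : ZMod n) =
      (if m = 0 then -2 * ∑ h : Fin d, Real.cos (k * ℓ h) / Real.sin (k * ℓ h) else 0) +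
      ∑ h : Fin d, ((if m = a h then 1 / Real.sin (k * ℓ h) else 0) +
        (if m = n - a h then 1 / Real.sin (k * ℓ h) else 0)) := by
  have hn : 0 < n := NeZero.pos n
  have h0 := hv (m : ZMod n) 0
  rw [sub_zero] at h0
  rw [← h0]
  unfold Mmat
  have e0 : ((m : ZMod n) = 0) ↔ m = 0 := by
    simpa using cast_inj_lt n m 0 hm hn
  have e1 : ∀ h, ((m : ZMod n) = (a h : ZMod n)) ↔ m = a h := fun h =>
    cast_inj_lt n m (a h) hm (by have := hlt h; omega)
  have e2 : ∀ h, ((m : ZMod n) = -(a h : ZMod n)) ↔ m = n - a h := fun h => by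
    have := cast_inj_lt n m (n - a h) hm (by have := hpos h; omega)
    rw [Nat.cast_sub (by have := hlt h; omega)] at this
    simpa using this
  simp only [sub_zero, e0, e1, e2]
  by_cases hm0 : m = 0
  · rw [if_pos hm0, if_pos hm0]
    refine (add_eq_left.mpr (Finset.sum_eq_zero ?_)).symm
    intro h _
    have := hpos h
    have := hlt h
    rw [if_neg (by omega), if_neg (by omega), add_zero]
  · rw [if_neg hm0, if_neg hm0, zero_add]
    refine Finset.sum_congr rfl fun h _ => ?_
    have := hpos h
    have := hlt h
    by_cases h1 : m = a h
    · rw [if_pos (Or.inl h1), if_pos h1, if_neg (by omega), add_zero]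
    · simp [h1]

lemma root_pair (n : ℕ) [NeZero n] (j b : ℕ) (hb : b ≤ n) :
    Complex.exp (2 * (Real.pi : ℂ) * Complex.I / n) ^ (j * b) +
      Complex.exp (2 * (Real.pi : ℂ) * Complex.I / n) ^ (j * (n - b)) =
    ((2 * Real.cos (2 * Real.pi * j * b / n) : ℝ) : ℂ) := by
  have hn : (n : ℂ) ≠ 0 := NeZero.ne _
  rw [← Complex.exp_nat_mul, ← Complex.exp_nat_mul]
  push_cast [Nat.cast_sub hb]
  rw [Complex.two_cos]
  congr 1
  · congr 1
    ring
  · rw [Complex.exp_eq_exp_iff_exists_int]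
    refine ⟨j, ?_⟩
    push_cast
    field_simp
    ring

lemma general_eig (n d : ℕ) [NeZero n] (a : Fin d → ℕ)
    (hpos : ∀ h, 0 < a h) (hlt : ∀ h, 2 * a h < n)
    (ℓ : Fin d → ℝ) (k : ℝ)
    (v : ZMod n → ℝ) (hv : ∀ i j, Mmat n d a ℓ k i j = v (i - j)) (j : ℕ) :
    ∑ m ∈ Finset.range n, (v (m : ZMod n) : ℂ) *
          Complex.exp (2 * (Real.pi : ℂ) * Complex.I / n) ^ (j * m) =
        ((2 * ∑ h : Fin d,
            (-(Real.cos (k * ℓ h) / Real.sin (k * ℓ h)) +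
              Real.cos (2 * Real.pi * j * a h / n) * (1 / Real.sin (k * ℓ h))) : ℝ) : ℂ) := by
  have hn : 0 < n := NeZero.pos n
  have hrp := fun h => root_pair n j (a h) (by have := hlt h; omega)
  generalize Complex.exp (2 * (Real.pi : ℂ) * Complex.I / n) = w at *
  have step : ∀ m ∈ Finset.range n, (v (m : ZMod n) : ℂ) * w ^ (j * m) =
      (if m = 0 then ((-2 * ∑ h : Fin d, Real.cos (k * ℓ h) / Real.sin (k * ℓ h) : ℝ) : ℂ)
          * w ^ (j * m) else 0) +
      ∑ h : Fin d, ((if m = a h then ((1 / Real.sin (k * ℓ h) : ℝ) : ℂ) * w ^ (j * m) else 0) +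
        (if m = n - a h then ((1 / Real.sin (k * ℓ h) : ℝ) : ℂ) * w ^ (j * m) else 0)) := by
    intro m hm
    rw [symbol_eq n d a hpos hlt ℓ k v hv m (Finset.mem_range.mp hm), Complex.ofReal_add, add_mul,
      Complex.ofReal_sum, Finset.sum_mul]
    congr 1
    · split_ifs <;> simp
    · refine Finset.sum_congr rfl fun h _ => ?_
      rw [Complex.ofReal_add, add_mul]
      congr 1 <;> split_ifs <;> simp
  rw [Finset.sum_congr rfl step, Finset.sum_add_distrib, Finset.sum_comm, Finset.sum_ite_eq',
    if_pos (Finset.mem_range.mpr hn)]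
  have : ∀ h : Fin d, ∑ m ∈ Finset.range n,
      ((if m = a h then ((1 / Real.sin (k * ℓ h) : ℝ) : ℂ) * w ^ (j * m) else 0) +
        (if m = n - a h then ((1 / Real.sin (k * ℓ h) : ℝ) : ℂ) * w ^ (j * m) else 0)) =
      ((1 / Real.sin (k * ℓ h) * (2 * Real.cos (2 * Real.pi * j * a h / n)) : ℝ) : ℂ) := by
    intro h
    have := hpos h
    have := hlt h
    rw [Finset.sum_add_distrib, Finset.sum_ite_eq', Finset.sum_ite_eq',
      if_pos (Finset.mem_range.mpr (by omega)), if_pos (Finset.mem_range.mpr (by omega)),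
      ← mul_add, hrp, ← Complex.ofReal_mul]
  rw [Finset.sum_congr rfl fun h _ => this h, mul_zero, pow_zero, mul_one,
    ← Complex.ofReal_sum, ← Complex.ofReal_add]
  congr 1
  rw [Finset.mul_sum, Finset.mul_sum, ← Finset.sum_add_distrib]
  refine Finset.sum_congr rfl fun h _ => ?_
  ring

lemma half_tan (x : ℝ) (hx : Real.sin x ≠ 0) :
    -(Real.cos x / Real.sin x) + 1 * (1 / Real.sin x) = Real.tan (x / 2) := by
  obtain ⟨y, rfl⟩ : ∃ y, x = 2 * y := ⟨x / 2, by ring⟩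
  rw [Real.sin_two_mul] at *
  have hs : Real.sin y ≠ 0 := fun h => hx (by simp [h])
  have hc : Real.cos y ≠ 0 := fun h => hx (by simp [h])
  rw [mul_div_cancel_left₀ y two_ne_zero, Real.tan_eq_sin_div_cos, Real.cos_two_mul]
  field_simp
  linear_combination (-2) * Real.sin_sq_add_cos_sq y

lemma half_cot (x : ℝ) (hx : Real.sin x ≠ 0) :
    -(Real.cos x / Real.sin x) + (-1) * (1 / Real.sin x) =
      -(Real.cos (x / 2) / Real.sin (x / 2)) := by
  obtain ⟨y, rfl⟩ : ∃ y, x = 2 * y := ⟨x / 2, by ring⟩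
  rw [Real.sin_two_mul] at *
  have hs : Real.sin y ≠ 0 := fun h => hx (by simp [h])
  have hc : Real.cos y ≠ 0 := fun h => hx (by simp [h])
  rw [mul_div_cancel_left₀ y two_ne_zero, Real.cos_two_mul]
  field_simp
  ring

/-- The eigenvalues `∑_{m=0}^{n-1} v(m) ω^{jm}` (with `ω = exp(2πi/n)`) of the
circulant secular matrix `M(k)` with symbol `v` equal the secular functions
`p_j(k)` for `0 ≤ j ≤ ⌊n/2⌋`. -/
theorem Mmat_eigenvalues (n d : ℕ) [NeZero n] (a : Fin d → ℕ) (hd : 1 ≤ d)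
    (hpos : ∀ h, 0 < a h) (hmono : StrictMono a) (hlt : ∀ h, 2 * a h < n)
    (ℓ : Fin d → ℝ) (hℓ : ∀ h, 0 < ℓ h) (k : ℝ)
    (hk : ∀ h, Real.sin (k * ℓ h) ≠ 0)
    (v : ZMod n → ℝ) (hv : ∀ i j, Mmat n d a ℓ k i j = v (i - j))
    (j : ℕ) (hj : j ≤ n / 2) :
    (j = 0 →
      ∑ m ∈ Finset.range n, (v (m : ZMod n) : ℂ) *
          Complex.exp (2 * (Real.pi : ℂ) * Complex.I / n) ^ (j * m) =
        ((2 * ∑ h : Fin d, Real.tan (k * ℓ h / 2) : ℝ) : ℂ)) ∧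
    (1 ≤ j ∧ j ≤ (n - 1) / 2 →
      ∑ m ∈ Finset.range n, (v (m : ZMod n) : ℂ) *
          Complex.exp (2 * (Real.pi : ℂ) * Complex.I / n) ^ (j * m) =
        ((2 * ∑ h : Fin d,
            (-(Real.cos (k * ℓ h) / Real.sin (k * ℓ h)) +
              Real.cos (2 * Real.pi * j * a h / n) * (1 / Real.sin (k * ℓ h))) : ℝ) : ℂ)) ∧
    (Even n ∧ 2 * j = n →
      ∑ m ∈ Finset.range n, (v (m : ZMod n) : ℂ) *
          Complex.exp (2 * (Real.pi : ℂ) * Complex.I / n) ^ (j * m) =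
        ((2 * (∑ h ∈ Finset.univ.filter (fun h => Even (a h)), Real.tan (k * ℓ h / 2)
             - ∑ h ∈ Finset.univ.filter (fun h => Odd (a h)),
                 Real.cos (k * ℓ h / 2) / Real.sin (k * ℓ h / 2)) : ℝ) : ℂ)) := by
  have hg := general_eig n d a hpos hlt ℓ k v hv j
  refine ⟨fun h0 => ?_, fun _ => hg, fun ⟨_, h2⟩ => ?_⟩
  · rw [hg]
    congr 2
    refine Finset.sum_congr rfl fun h _ => ?_
    rw [← half_tan _ (hk h), h0]
    simp
  · rw [hg]
    congr 2
    have hn : (n : ℝ) ≠ 0 := NeZero.ne _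
    have hcos : ∀ h, Real.cos (2 * Real.pi * j * a h / n) = (-1) ^ a h := by
      intro h
      rw [← Real.cos_nat_mul_pi]
      congr 1
      have : (n : ℝ) = 2 * j := by exact_mod_cast h2.symm
      rw [div_eq_iff hn, this]
      ring
    rw [Finset.sum_filter, Finset.sum_filter, ← Finset.sum_sub_distrib]
    refine Finset.sum_congr rfl fun h _ => ?_
    rw [hcos]
    rcases Nat.even_or_odd (a h) with he | ho
    · rw [if_pos he, if_neg (Nat.not_odd_iff_even.mpr he), he.neg_one_pow, half_tan _ (hk h),
        sub_zero]
    · rw [if_neg (Nat.not_even_iff_odd.mpr ho), if_pos ho, ho.neg_one_pow, half_cot _ (hk h),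
        zero_sub]
end

section
/- Let n be odd and let C_n(ℓ;a) be a circulant graph with symmetric edge lengths ℓ_1,…,ℓ_d > 0. Then for every k ∈ ℝ with sin(kℓ_h) ≠ 0 for all h, det M(k) = p_0(k) · ∏_{j=1}^{(n−1)/2} p_j(k)². -/
open Finset

/-- The Fourier matrix of `ZMod n`. -/
noncomputable def fourMat (n : ℕ) [NeZero n] : Matrix (ZMod n) (ZMod n) ℂ :=
  fun i j => ZMod.stdAddChar (i * j)

lemma fourMat_det_ne_zero (n : ℕ) [NeZero n] : (fourMat n).det ≠ 0 := by
  have h : fourMat n * (Matrix.of fun j k => (ZMod.stdAddChar (-(j * k)) : ℂ))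
      = (n : ℂ) • (1 : Matrix (ZMod n) (ZMod n) ℂ) := by
    ext i k
    rw [Matrix.mul_apply]
    have := AddChar.sum_mulShift (i - k) (ZMod.isPrimitive_stdAddChar n)
    simp only [fourMat, Matrix.of_apply, ← AddChar.map_add_eq_mul]
    rw [Matrix.smul_apply, Matrix.one_apply]
    have h2 : ∀ x : ZMod n, i * x + -(x * k) = x * (i - k) := fun x => by ring
    simp only [h2, this, sub_eq_zero, ZMod.card]
    split_ifs <;> simp
  intro h0
  have h3 := congrArg Matrix.det h
  rw [Matrix.det_mul, h0, zero_mul, Matrix.det_smul, Matrix.det_one, mul_one] at h3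
  exact pow_ne_zero _ (Nat.cast_ne_zero.mpr (NeZero.ne n)) h3.symm

lemma char_add (n : ℕ) [NeZero n] (a : ℕ) (j : ZMod n) :
    (ZMod.stdAddChar ((a : ZMod n) * j) : ℂ) + ZMod.stdAddChar (-((a : ZMod n) * j)) =
      2 * ((Real.cos (2 * Real.pi * j.val * a / n) : ℝ) : ℂ) := by
  have h1 : (a : ZMod n) * j = (((a * j.val : ℕ) : ℤ) : ZMod n) := by
    push_cast; simp
  have h2 : -((a : ZMod n) * j) = ((-((a * j.val : ℕ) : ℤ) : ℤ) : ZMod n) := by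
    rw [Int.cast_neg, ← h1]
  rw [h2, h1, ZMod.stdAddChar_coe, ZMod.stdAddChar_coe, Complex.ofReal_cos, Complex.two_cos]
  congr 1 <;> congr 1 <;> push_cast <;> ring

/-- The eigenvalues. -/
noncomputable def pfun (n d : ℕ) (a : Fin d → ℕ) (ℓ : Fin d → ℝ) (k : ℝ) (j : ℕ) : ℝ :=
  2 * ∑ h : Fin d, (-(Real.cos (k * ℓ h) / Real.sin (k * ℓ h)) +
              Real.cos (2 * Real.pi * j * a h / n) * (1 / Real.sin (k * ℓ h)))

lemma Mmat_apply' (n d : ℕ) [NeZero n] (a : Fin d → ℕ)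
    (hpos : ∀ h, 0 < a h) (hlt : ∀ h, 2 * a h < n) (ℓ : Fin d → ℝ) (k : ℝ) (i x : ZMod n) :
    Mmat n d a ℓ k i x =
      (if x = i then -2 * ∑ h : Fin d, Real.cos (k * ℓ h) / Real.sin (k * ℓ h) else 0) +
      ∑ h : Fin d, ((if x = i - a h then 1 / Real.sin (k * ℓ h) else 0) +
        (if x = i + a h then 1 / Real.sin (k * ℓ h) else 0)) := by
  have ha : ∀ h, (a h : ZMod n) ≠ 0 := by
    intro h h0
    rw [ZMod.natCast_eq_zero_iff] at h0
    have := Nat.le_of_dvd (hpos h) h0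
    have := hlt h
    omega
  have ha2 : ∀ h, (a h : ZMod n) + a h ≠ 0 := by
    intro h h0
    have h0 : ((2 * a h : ℕ) : ZMod n) = 0 := by push_cast; rw [two_mul]; exact h0
    rw [ZMod.natCast_eq_zero_iff] at h0
    have := Nat.le_of_dvd (by have := hpos h; omega) h0
    have := hlt h
    omega
  unfold Mmat
  by_cases hix : i = x
  · subst hix
    have c : ∀ h, ¬ i = i - (a h : ZMod n) := fun h e => ha h (by linear_combination e)
    simp [ha, c]
  · rw [if_neg hix, if_neg (Ne.symm hix), zero_add]
    refine Finset.sum_congr rfl fun h _ => ?_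
    have e1 : i - x = a h ↔ x = i - a h := by
      constructor <;> intro e <;> linear_combination -e
    have e2 : i - x = -(a h : ZMod n) ↔ x = i + a h := by
      constructor <;> intro e <;> linear_combination -e
    simp only [e1, e2]
    by_cases c1 : x = i - a h
    · have c2 : ¬ x = i + a h := fun c2 => ha2 h (by linear_combination c1 - c2)
      rw [if_pos (Or.inl c1), if_pos c1, if_neg c2, add_zero]
    · simp [c1]

lemma Mmat_mul_four (n d : ℕ) [NeZero n] (a : Fin d → ℕ)
    (hpos : ∀ h, 0 < a h) (hlt : ∀ h, 2 * a h < n) (ℓ : Fin d → ℝ) (k : ℝ) :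
    (Mmat n d a ℓ k).map Complex.ofRealHom * fourMat n =
      fourMat n * Matrix.diagonal fun j : ZMod n => (pfun n d a ℓ k j.val : ℂ) := by
  ext i j
  rw [Matrix.mul_diagonal, Matrix.mul_apply]
  simp only [Matrix.map_apply, Mmat_apply' n d a hpos hlt, fourMat, map_add, map_sum, add_mul,
    Finset.sum_add_distrib, Finset.sum_mul, apply_ite Complex.ofRealHom, map_zero, ite_mul,
    zero_mul]
  rw [Finset.sum_comm (s := Finset.univ) (t := Finset.univ (α := Fin d)),
    Finset.sum_comm (s := Finset.univ) (t := Finset.univ (α := Fin d))]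
  simp only [Finset.sum_ite_eq', Finset.mem_univ, if_true]
  rw [← Finset.sum_add_distrib]
  have key : ∀ h : Fin d, Complex.ofRealHom (1 / Real.sin (k * ℓ h)) *
        ZMod.stdAddChar ((i - (a h : ZMod n)) * j) +
      Complex.ofRealHom (1 / Real.sin (k * ℓ h)) * ZMod.stdAddChar ((i + (a h : ZMod n)) * j) =
      ZMod.stdAddChar (i * j) * (2 * ((Real.cos (2 * Real.pi * j.val * a h / n) *
        (1 / Real.sin (k * ℓ h)) : ℝ) : ℂ)) := by
    intro h
    rw [sub_mul, add_mul, sub_eq_add_neg, AddChar.map_add_eq_mul, AddChar.map_add_eq_mul,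
      Complex.ofReal_mul]
    have := char_add n (a h) j
    simp only [Complex.ofRealHom_eq_coe]
    linear_combination (((1 / Real.sin (k * ℓ h) : ℝ) : ℂ) * ZMod.stdAddChar (i * j)) * this
  rw [Finset.sum_congr rfl fun h _ => key h, ← Finset.mul_sum, ← Finset.mul_sum, pfun,
    Finset.sum_add_distrib, Finset.sum_neg_distrib]
  simp only [Complex.ofRealHom_eq_coe]
  push_cast
  ring

lemma Mmat_det (n d : ℕ) [NeZero n] (a : Fin d → ℕ)
    (hpos : ∀ h, 0 < a h) (hlt : ∀ h, 2 * a h < n) (ℓ : Fin d → ℝ) (k : ℝ) :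
    (Mmat n d a ℓ k).det = ∏ j ∈ Finset.range n, pfun n d a ℓ k j := by
  have h := congrArg Matrix.det (Mmat_mul_four n d a hpos hlt ℓ k)
  rw [Matrix.det_mul, Matrix.det_mul, mul_comm, Matrix.det_diagonal] at h
  have h := mul_left_cancel₀ (fourMat_det_ne_zero n) h
  have h2 : ∏ j : ZMod n, pfun n d a ℓ k j.val = ∏ j ∈ Finset.range n, pfun n d a ℓ k j := by
    obtain ⟨m, rfl⟩ := Nat.exists_eq_succ_of_ne_zero (NeZero.ne n)
    exact Fin.prod_univ_eq_prod_range (fun t => pfun (m+1) d a ℓ k t) (m+1)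
  rw [← h2]
  have h3 : Complex.ofRealHom (Mmat n d a ℓ k).det = ((Mmat n d a ℓ k).map Complex.ofRealHom).det :=
    RingHom.map_det _ _
  rw [← h3] at h
  apply Complex.ofReal_injective
  rw [Complex.ofReal_prod]
  exact h

/-- For odd `n`, the secular determinant of the edge-symmetric quantum
circulant graph factorizes as `det M(k) = p_0(k) ∏_{j=1}^{(n-1)/2} p_j(k)²`. -/
theorem Mmat_det_odd (n d : ℕ) [NeZero n] (hn : Odd n) (a : Fin d → ℕ)
    (hd : 1 ≤ d) (hpos : ∀ h, 0 < a h) (hmono : StrictMono a)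
    (hlt : ∀ h, 2 * a h < n)
    (ℓ : Fin d → ℝ) (hℓ : ∀ h, 0 < ℓ h) (k : ℝ)
    (hk : ∀ h, Real.sin (k * ℓ h) ≠ 0) :
    (Mmat n d a ℓ k).det =
      (2 * ∑ h : Fin d, Real.tan (k * ℓ h / 2)) *
        ∏ j ∈ Finset.Icc 1 ((n - 1) / 2),
          (2 * ∑ h : Fin d,
            (-(Real.cos (k * ℓ h) / Real.sin (k * ℓ h)) +
              Real.cos (2 * Real.pi * j * a h / n) * (1 / Real.sin (k * ℓ h)))) ^ 2 := by
  have hzero : pfun n d a ℓ k 0 = 2 * ∑ h : Fin d, Real.tan (k * ℓ h / 2) := by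
    unfold pfun
    congr 1
    refine Finset.sum_congr rfl fun h _ => ?_
    have hs := hk h
    have e : k * ℓ h = 2 * (k * ℓ h / 2) := by ring
    generalize k * ℓ h / 2 = y at *
    rw [e, Real.sin_two_mul] at hs
    have hsy : Real.sin y ≠ 0 := fun h0 => hs (by rw [h0]; ring)
    have hcy : Real.cos y ≠ 0 := fun h0 => hs (by rw [h0]; ring)
    rw [e, Real.sin_two_mul, Real.cos_two_mul, Real.tan_eq_sin_div_cos]
    simp only [Nat.cast_zero, mul_zero, zero_mul, zero_div, Real.cos_zero]
    field_simp
    have := Real.sin_sq_add_cos_sq y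
    linear_combination (-2) * this
  rw [Mmat_det n d a hpos hlt ℓ k, ← hzero]
  obtain ⟨m, hm⟩ := hn
  have hm2 : (n - 1) / 2 = m := by omega
  have hsymm : ∀ j ≤ n, pfun n d a ℓ k (n - j) = pfun n d a ℓ k j := by
    intro j hj
    unfold pfun
    congr 1
    refine Finset.sum_congr rfl fun h _ => ?_
    congr 2
    have hn0 : (n : ℝ) ≠ 0 := Nat.cast_ne_zero.mpr (NeZero.ne n)
    rw [Nat.cast_sub hj, ← Real.cos_nat_mul_two_pi_sub _ (a h)]
    congr 1
    field_simp
    ring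
  rw [hm2]
  change _ = pfun n d a ℓ k 0 * ∏ j ∈ Finset.Icc 1 m, (pfun n d a ℓ k j) ^ 2
  have hI : ∏ j ∈ Finset.Icc 1 m, (pfun n d a ℓ k j) ^ 2
      = ∏ j ∈ Finset.range m, (pfun n d a ℓ k (j + 1)) ^ 2 := by
    rw [Finset.range_eq_Ico, Finset.prod_Ico_add' (fun j => (pfun n d a ℓ k j) ^ 2) 0 m 1]
    rfl
  have hr : Finset.range n = Finset.range (m + m + 1) := by congr 1; omega
  rw [hI, hr, Finset.prod_range_succ', mul_comm, Finset.prod_range_add, Finset.prod_pow, sq]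
  congr 2
  rw [← Finset.prod_range_reflect]
  refine Finset.prod_congr rfl fun j hj => ?_
  rw [Finset.mem_range] at hj
  rw [← hsymm (j + 1) (by omega)]
  congr 1
  omega
end

section
/- Let ℓ_1,…,ℓ_d > 0 and let c_1,…,c_d ∈ [−1,1]. Define q(k) = ∑_{h=1}^d [c_h·csc(kℓ_h) − cot(kℓ_h)]. Then at every k ∈ ℝ with sin(kℓ_h) ≠ 0 for all h, q is differentiable with q'(k) = ∑_{h=1}^d ℓ_h·csc(kℓ_h)·(csc(kℓ_h) − c_h·cot(kℓ_h)), and q'(k) > 0. In particular, for a circulant graph with symmetric edge lengths and 1 ≤ j ≤ ⌊(n−1)/2⌋, the function p_j(k) = 2∑_{h=1}^d [−cot(kℓ_h) + cos(2πja_h/n)·csc(kℓ_h)] has strictly positive derivative wherever all sin(kℓ_h) ≠ 0, so p_j is strictly increasing on every open interval avoiding its singularities. -/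
open Finset

/-- The function `q(k) = ∑_h [c_h csc(k ℓ_h) - cot(k ℓ_h)]` (with
`c_h ∈ [-1,1]`, e.g. `c_h = cos(2πja_h/n)` for the secular function `p_j/2`
of an edge-symmetric circulant graph) is differentiable wherever all
`sin(k ℓ_h) ≠ 0`, with derivative
`q'(k) = ∑_h ℓ_h csc(k ℓ_h)(csc(k ℓ_h) - c_h cot(k ℓ_h)) > 0`; consequently
`q` is strictly increasing on every open interval avoiding its singularities. -/
theorem secular_strictly_increasing (d : ℕ) (hd : 1 ≤ d) (ℓ : Fin d → ℝ)
    (hℓ : ∀ h, 0 < ℓ h) (c : Fin d → ℝ)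
    (hc : ∀ h, c h ∈ Set.Icc (-1 : ℝ) 1) :
    (∀ k : ℝ, (∀ h, Real.sin (k * ℓ h) ≠ 0) →
      HasDerivAt (fun x : ℝ => ∑ h : Fin d,
          (c h * (1 / Real.sin (x * ℓ h)) -
            Real.cos (x * ℓ h) / Real.sin (x * ℓ h)))
        (∑ h : Fin d, ℓ h * (1 / Real.sin (k * ℓ h)) *
          (1 / Real.sin (k * ℓ h) -
            c h * (Real.cos (k * ℓ h) / Real.sin (k * ℓ h)))) k ∧
      0 < ∑ h : Fin d, ℓ h * (1 / Real.sin (k * ℓ h)) *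
          (1 / Real.sin (k * ℓ h) -
            c h * (Real.cos (k * ℓ h) / Real.sin (k * ℓ h)))) ∧
    (∀ α β : ℝ, α < β → (∀ x ∈ Set.Ioo α β, ∀ h, Real.sin (x * ℓ h) ≠ 0) →
      StrictMonoOn (fun x : ℝ => ∑ h : Fin d,
          (c h * (1 / Real.sin (x * ℓ h)) -
            Real.cos (x * ℓ h) / Real.sin (x * ℓ h)))
        (Set.Ioo α β)) := by
  have key : ∀ k : ℝ, (∀ h, Real.sin (k * ℓ h) ≠ 0) →
      HasDerivAt (fun x : ℝ => ∑ h : Fin d,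
          (c h * (1 / Real.sin (x * ℓ h)) -
            Real.cos (x * ℓ h) / Real.sin (x * ℓ h)))
        (∑ h : Fin d, ℓ h * (1 / Real.sin (k * ℓ h)) *
          (1 / Real.sin (k * ℓ h) -
            c h * (Real.cos (k * ℓ h) / Real.sin (k * ℓ h)))) k ∧
      0 < ∑ h : Fin d, ℓ h * (1 / Real.sin (k * ℓ h)) *
          (1 / Real.sin (k * ℓ h) -
            c h * (Real.cos (k * ℓ h) / Real.sin (k * ℓ h))) := by
    intro k hk
    constructor
    · apply HasDerivAt.fun_sum
      intro h _
      have hs := hk h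
      have h0 : HasDerivAt (fun x : ℝ => x * ℓ h) (ℓ h) k := by
        simpa using (hasDerivAt_id k).mul_const (ℓ h)
      have h1 := h0.sin
      have h2 := h0.cos
      have h3 := (((hasDerivAt_const k (1 : ℝ)).fun_div h1 hs).const_mul (c h)).fun_sub
        (h2.fun_div h1 hs)
      refine h3.congr_deriv ?_
      have h4 := Real.sin_sq_add_cos_sq (k * ℓ h)
      field_simp
      linear_combination (ℓ h) * h4
    · apply Finset.sum_pos
      · intro h _
        have hs := hk h
        have h4 := Real.sin_sq_add_cos_sq (k * ℓ h)
        have hs2 : 0 < Real.sin (k * ℓ h) ^ 2 := by positivity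
        obtain ⟨c1, c2⟩ := hc h
        have hcos : |Real.cos (k * ℓ h)| < 1 := by
          rw [← sq_lt_one_iff_abs_lt_one]
          linarith
        obtain ⟨a1, a2⟩ := abs_lt.mp hcos
        have h5 : 0 < 1 - c h * Real.cos (k * ℓ h) := by
          nlinarith [sq_nonneg (c h - Real.cos (k * ℓ h)), mul_nonneg (sub_nonneg.2 c1) (sub_nonneg.2 c2)]
        have h6 : ℓ h * (1 / Real.sin (k * ℓ h)) *
          (1 / Real.sin (k * ℓ h) -
            c h * (Real.cos (k * ℓ h) / Real.sin (k * ℓ h))) =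
            ℓ h * (1 - c h * Real.cos (k * ℓ h)) / Real.sin (k * ℓ h) ^ 2 := by
          field_simp
        rw [h6]
        exact div_pos (mul_pos (hℓ h) h5) hs2
      · exact ⟨⟨0, hd⟩, Finset.mem_univ _⟩
  refine ⟨key, ?_⟩
  intro α β _ hs
  apply strictMonoOn_of_deriv_pos (convex_Ioo α β)
  · intro x hx
    exact (key x (hs x hx)).1.continuousAt.continuousWithinAt
  · intro x hx
    rw [interior_Ioo] at hx
    rw [(key x (hs x hx)).1.deriv]
    exact (key x (hs x hx)).2
end

section
/- Let ℓ_1,…,ℓ_d > 0 and let A = {(2m+1)π/ℓ_h : m a nonnegative integer, 1 ≤ h ≤ d} be the set of positive singularities of the function p_0(k) = 2∑_{h=1}^d tan(kℓ_h/2). Let α, β ∈ A with α < β and (α,β) ∩ A = ∅ (i.e. α and β are consecutive points of A). Then there exists exactly one k ∈ (α,β) such that ∑_{h=1}^d tan(kℓ_h/2) = 0. -/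
open Finset

lemma aux_tan_atBot (l : ℝ) (hl : 0 < l) (a : ℝ) (m : ℕ) (ha : a = (2 * m + 1) * Real.pi / l) :
    Filter.Tendsto (fun k : ℝ => Real.tan (k * l / 2)) (nhdsWithin a (Set.Ioi a)) Filter.atBot := by
  have h1 : Filter.Tendsto (fun k : ℝ => k * l / 2 - ((m + 1 : ℕ) : ℝ) * Real.pi)
      (nhdsWithin a (Set.Ioi a)) (nhdsWithin (-(Real.pi / 2)) (Set.Ioi (-(Real.pi / 2)))) := by
    have e : -(Real.pi / 2) = a * l / 2 - ((m + 1 : ℕ) : ℝ) * Real.pi := by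
      rw [ha]; push_cast; field_simp; ring
    rw [e]
    apply tendsto_nhdsWithin_iff.2
    constructor
    · apply Filter.Tendsto.mono_left _ nhdsWithin_le_nhds
      exact Continuous.tendsto (by fun_prop) a
    · filter_upwards [self_mem_nhdsWithin] with k hk
      have := mul_lt_mul_of_pos_right (Set.mem_Ioi.1 hk) hl
      simp only [Set.mem_Ioi]; linarith
  have h2 := Real.tendsto_tan_neg_pi_div_two.comp h1
  refine h2.congr fun k => ?_
  exact Real.tan_sub_nat_mul_pi _ _

lemma aux_tan_atTop (l : ℝ) (hl : 0 < l) (a : ℝ) (m : ℕ) (ha : a = (2 * m + 1) * Real.pi / l) :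
    Filter.Tendsto (fun k : ℝ => Real.tan (k * l / 2)) (nhdsWithin a (Set.Iio a)) Filter.atTop := by
  have h1 : Filter.Tendsto (fun k : ℝ => k * l / 2 - (m : ℝ) * Real.pi)
      (nhdsWithin a (Set.Iio a)) (nhdsWithin (Real.pi / 2) (Set.Iio (Real.pi / 2))) := by
    have e : Real.pi / 2 = a * l / 2 - (m : ℝ) * Real.pi := by
      rw [ha]; field_simp; ring
    rw [e]
    apply tendsto_nhdsWithin_iff.2
    constructor
    · apply Filter.Tendsto.mono_left _ nhdsWithin_le_nhds
      exact Continuous.tendsto (by fun_prop) a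
    · filter_upwards [self_mem_nhdsWithin] with k hk
      have := mul_lt_mul_of_pos_right (Set.mem_Iio.1 hk) hl
      simp only [Set.mem_Iio]; linarith
  have h2 := Real.tendsto_tan_pi_div_two.comp h1
  refine h2.congr fun k => ?_
  exact Real.tan_sub_nat_mul_pi _ _

/-- Between each pair of consecutive singularities of
`p_0(k) = 2 ∑_h tan(k ℓ_h / 2)` there is exactly one zero of `p_0`. -/
theorem p0_unique_zero_between_asymptotes (d : ℕ) (hd : 1 ≤ d)
    (ℓ : Fin d → ℝ) (hℓ : ∀ h, 0 < ℓ h) (A : Set ℝ)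
    (hA : A = {x : ℝ | ∃ m : ℕ, ∃ h : Fin d, x = (2 * m + 1) * Real.pi / ℓ h})
    (α β : ℝ) (hα : α ∈ A) (hβ : β ∈ A) (hαβ : α < β)
    (hgap : Set.Ioo α β ∩ A = ∅) :
    ∃! k : ℝ, k ∈ Set.Ioo α β ∧ ∑ h : Fin d, Real.tan (k * ℓ h / 2) = 0 := by
  subst hA
  obtain ⟨m, a, ha⟩ := hα
  obtain ⟨n, b, hb⟩ := hβ
  have hpi := Real.pi_pos
  have hα0 : 0 < α := by
    rw [ha]; have := hℓ a; positivity
  have hcos : ∀ h, ∀ k ∈ Set.Ioo α β, Real.cos (k * ℓ h / 2) ≠ 0 := by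
    intro h k hk h0
    obtain ⟨j, hj⟩ := Real.cos_eq_zero_iff.1 h0
    have hl := hℓ h
    have hkpos : 0 < k * ℓ h / 2 := by
      have : 0 < k := hα0.trans hk.1
      positivity
    have hj0 : 0 ≤ j := by
      by_contra hneg
      have h1 : j ≤ -1 := by omega
      have h2 : (j : ℝ) ≤ -1 := by exact_mod_cast h1
      rw [hj] at hkpos
      nlinarith
    lift j to ℕ using hj0
    have : k ∈ Set.Ioo α β ∩ {x : ℝ | ∃ m : ℕ, ∃ h : Fin d, x = (2 * m + 1) * Real.pi / ℓ h} := by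
      refine ⟨hk, j, h, ?_⟩
      rw [eq_div_iff hl.ne']
      push_cast at hj
      linarith
    rw [hgap] at this
    exact this
  have hder : ∀ h, ∀ k ∈ Set.Ioo α β, HasDerivAt (fun k : ℝ => Real.tan (k * ℓ h / 2))
      (1 / Real.cos (k * ℓ h / 2) ^ 2 * (ℓ h / 2)) k := by
    intro h k hk
    have h1 : HasDerivAt (fun k : ℝ => k * ℓ h / 2) (ℓ h / 2) k := by
      simpa using ((hasDerivAt_id k).mul_const (ℓ h)).div_const 2
    exact (Real.hasDerivAt_tan (hcos h k hk)).comp k h1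
  have hcont : ∀ h, ContinuousOn (fun k : ℝ => Real.tan (k * ℓ h / 2)) (Set.Ioo α β) :=
    fun h k hk => (hder h k hk).continuousAt.continuousWithinAt
  have hmono : ∀ h, StrictMonoOn (fun k : ℝ => Real.tan (k * ℓ h / 2)) (Set.Ioo α β) := by
    intro h
    apply strictMonoOn_of_deriv_pos (convex_Ioo α β) (hcont h)
    intro k hk
    rw [interior_Ioo] at hk
    rw [(hder h k hk).deriv]
    have := hℓ h
    have := hcos h k hk
    positivity
  have hScont : ContinuousOn (fun k : ℝ => ∑ h : Fin d, Real.tan (k * ℓ h / 2)) (Set.Ioo α β) :=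
    continuousOn_finsetSum _ fun h _ => hcont h
  have hSmono : StrictMonoOn (fun k : ℝ => ∑ h : Fin d, Real.tan (k * ℓ h / 2))
      (Set.Ioo α β) := by
    intro x hx y hy hxy
    exact Finset.sum_lt_sum_of_nonempty ⟨a, Finset.mem_univ a⟩ fun h _ => hmono h hx hy hxy
  obtain ⟨c, hc⟩ : (Set.Ioo α β).Nonempty := Set.nonempty_Ioo.2 hαβ
  have hlow : ∃ x ∈ Set.Ioo α β, ∑ h : Fin d, Real.tan (x * ℓ h / 2) ≤ 0 := by
    have h1 := (aux_tan_atBot (ℓ a) (hℓ a) α m ha).eventually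
      (Filter.eventually_le_atBot (-∑ h ∈ Finset.univ.erase a, Real.tan (c * ℓ h / 2)))
    obtain ⟨x, hx, hx2⟩ := (h1.and (Ioo_mem_nhdsGT hc.1)).exists
    have hxm : x ∈ Set.Ioo α β := ⟨hx2.1, hx2.2.trans hc.2⟩
    refine ⟨x, hxm, ?_⟩
    rw [← Finset.add_sum_erase _ _ (Finset.mem_univ a)]
    have : ∑ h ∈ Finset.univ.erase a, Real.tan (x * ℓ h / 2)
        ≤ ∑ h ∈ Finset.univ.erase a, Real.tan (c * ℓ h / 2) :=
      Finset.sum_le_sum fun h _ => (hmono h hxm hc hx2.2).le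
    linarith
  have hhigh : ∃ x ∈ Set.Ioo α β, 0 ≤ ∑ h : Fin d, Real.tan (x * ℓ h / 2) := by
    have h1 := (aux_tan_atTop (ℓ b) (hℓ b) β n hb).eventually
      (Filter.eventually_ge_atTop (-∑ h ∈ Finset.univ.erase b, Real.tan (c * ℓ h / 2)))
    obtain ⟨x, hx, hx2⟩ := (h1.and (Ioo_mem_nhdsLT hc.2)).exists
    have hxm : x ∈ Set.Ioo α β := ⟨hc.1.trans hx2.1, hx2.2⟩
    refine ⟨x, hxm, ?_⟩
    rw [← Finset.add_sum_erase _ _ (Finset.mem_univ b)]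
    have : ∑ h ∈ Finset.univ.erase b, Real.tan (c * ℓ h / 2)
        ≤ ∑ h ∈ Finset.univ.erase b, Real.tan (x * ℓ h / 2) :=
      Finset.sum_le_sum fun h _ => (hmono h hc hxm hx2.1).le
    linarith
  obtain ⟨x, hx, hx0⟩ := hlow
  obtain ⟨y, hy, hy0⟩ := hhigh
  obtain ⟨k, hk, hk0⟩ := isPreconnected_Ioo.intermediate_value hx hy hScont ⟨hx0, hy0⟩
  refine ⟨k, ⟨hk, hk0⟩, ?_⟩
  rintro k' ⟨hk', hk'0⟩
  exact hSmono.injOn hk' hk (hk'0.trans hk0.symm)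
end

section
/- Let ℓ_1,…,ℓ_d > 0 be such that ℓ_h/ℓ_{h'} is irrational for all h ≠ h'. Let 0 ≤ a < b be real numbers and let N_0(a,b) be the number of k ∈ (a,b) such that cos(kℓ_h/2) ≠ 0 for all h and ∑_{h=1}^d tan(kℓ_h/2) = 0. Then this set of zeros is finite and (b−a)·(∑_{h=1}^d ℓ_h)/(2π) − d − 1 ≤ N_0(a,b) ≤ (b−a)·(∑_{h=1}^d ℓ_h)/(2π) + d + 1. -/
open Finset

lemma aux_tan_lt {u v : ℝ} (huv : u < v) (h : ∀ t ∈ Set.Icc u v, Real.cos t ≠ 0) :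
    Real.tan u < Real.tan v := by
  have hm : StrictMonoOn Real.tan (Set.Icc u v) := by
    apply strictMonoOn_of_deriv_pos (convex_Icc u v)
    · intro t ht
      exact (Real.continuousAt_tan.2 (h t ht)).continuousWithinAt
    · intro t ht
      rw [interior_Icc] at ht
      have := h t (Set.Ioo_subset_Icc_self ht)
      rw [Real.deriv_tan]
      positivity
  exact hm (Set.left_mem_Icc.2 huv.le) (Set.right_mem_Icc.2 huv.le) huv

open Filter Topology in
lemma aux_left {l x : ℝ} (hl : 0 < l) (hx : Real.cos (x * l / 2) = 0) :
    Tendsto (fun k => Real.tan (k * l / 2)) (𝓝[<] x) atTop := by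
  obtain ⟨m, hm⟩ := Real.cos_eq_zero_iff.1 hx
  have h1 : Tendsto (fun k => k * l / 2 - m * Real.pi) (𝓝[<] x) (𝓝[<] (Real.pi / 2)) := by
    apply tendsto_nhdsWithin_of_tendsto_nhds_of_eventually_within
    · have : Real.pi / 2 = x * l / 2 - m * Real.pi := by rw [hm]; ring
      rw [this]
      apply Tendsto.mono_left _ nhdsWithin_le_nhds
      exact Continuous.tendsto (by fun_prop) x
    · filter_upwards [self_mem_nhdsWithin] with k hk
      have : k * l < x * l := mul_lt_mul_of_pos_right hk hl
      simp only [Set.mem_Iio]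
      linarith
  refine (Real.tendsto_tan_pi_div_two.comp h1).congr ?_
  intro k
  simp [Real.tan_sub_int_mul_pi]

open Filter Topology in
lemma aux_right {l x : ℝ} (hl : 0 < l) (hx : Real.cos (x * l / 2) = 0) :
    Tendsto (fun k => Real.tan (k * l / 2)) (𝓝[>] x) atBot := by
  obtain ⟨m, hm⟩ := Real.cos_eq_zero_iff.1 hx
  have h1 : Tendsto (fun k => k * l / 2 - (m + 1 : ℤ) * Real.pi) (𝓝[>] x)
      (𝓝[>] (-(Real.pi / 2))) := by
    apply tendsto_nhdsWithin_of_tendsto_nhds_of_eventually_within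
    · have : -(Real.pi / 2) = x * l / 2 - (m + 1 : ℤ) * Real.pi := by rw [hm]; push_cast; ring
      rw [this]
      apply Tendsto.mono_left _ nhdsWithin_le_nhds
      exact Continuous.tendsto (by fun_prop) x
    · filter_upwards [self_mem_nhdsWithin] with k hk
      have : x * l < k * l := mul_lt_mul_of_pos_right hk hl
      simp only [Set.mem_Ioi]
      push_cast
      linarith
  refine (Real.tendsto_tan_neg_pi_div_two.comp h1).congr ?_
  intro k
  simp only [Function.comp, Real.tan_sub_int_mul_pi]

lemma aux_count {l a b : ℝ} (hl : 0 < l) (hab : a < b) :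
    ∃ P : Finset ℝ, (∀ k, k ∈ P ↔ k ∈ Set.Ioo a b ∧ Real.cos (k * l / 2) = 0) ∧
      (b - a) * l / (2 * Real.pi) - 1 ≤ (P.card : ℝ) ∧
      (P.card : ℝ) ≤ (b - a) * l / (2 * Real.pi) + 1 := by
  have hpi := Real.pi_pos
  set x := (a * l / Real.pi - 1) / 2 with hx
  set y := (b * l / Real.pi - 1) / 2 with hy
  have hyx : y - x = (b - a) * l / (2 * Real.pi) := by
    rw [hx, hy]; field_simp; ring
  have hpos : 0 < (b - a) * l / (2 * Real.pi) := by
    have : 0 < b - a := by linarith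
    positivity
  have hinj : Function.Injective (fun m : ℤ => (2 * (m : ℝ) + 1) * Real.pi / l) := by
    intro m n h
    have h2 : (2 * (m : ℝ) + 1) * Real.pi / l = (2 * (n : ℝ) + 1) * Real.pi / l := h
    field_simp at h2
    have : (m : ℝ) = n := by linarith
    exact_mod_cast this
  refine ⟨(Finset.Ioo ⌊x⌋ ⌈y⌉).image (fun m : ℤ => (2 * (m : ℝ) + 1) * Real.pi / l), ?_, ?_⟩
  · have key : ∀ m : ℤ, (m ∈ Finset.Ioo ⌊x⌋ ⌈y⌉ ↔
        (2 * (m : ℝ) + 1) * Real.pi / l ∈ Set.Ioo a b) := by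
      intro m
      rw [Finset.mem_Ioo, Int.floor_lt, Int.lt_ceil, Set.mem_Ioo, lt_div_iff₀ hl, div_lt_iff₀ hl,
        hx, hy, div_lt_iff₀ two_pos, lt_div_iff₀ two_pos, sub_lt_iff_lt_add, lt_sub_iff_add_lt,
        div_lt_iff₀ hpi, lt_div_iff₀ hpi, mul_comm (m : ℝ) 2]
    intro k
    rw [Finset.mem_image, Real.cos_eq_zero_iff]
    constructor
    · rintro ⟨m, hm, rfl⟩
      refine ⟨(key m).1 hm, m, ?_⟩
      field_simp
    · rintro ⟨hk, m, hm⟩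
      have : (2 * (m : ℝ) + 1) * Real.pi / l = k := by
        rw [div_eq_iff hl.ne']; linarith
      exact ⟨m, (key m).2 (this ▸ hk), this⟩
  · rw [Finset.card_image_of_injective _ hinj, Int.card_Ioo]
    have h1 := Int.floor_le x
    have h2 := Int.lt_floor_add_one x
    have h3 := Int.le_ceil y
    have h4 := Int.ceil_lt_add_one y
    have h5 : (⌊x⌋ : ℝ) < ⌈y⌉ := by linarith
    have h6 : ⌊x⌋ < ⌈y⌉ := by exact_mod_cast h5
    have h7 : (((⌈y⌉ - ⌊x⌋ - 1).toNat : ℤ) : ℝ) = ((⌈y⌉ - ⌊x⌋ - 1 : ℤ) : ℝ) := by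
      rw [Int.toNat_of_nonneg (by omega)]
    rw [Int.cast_natCast] at h7
    rw [h7]
    push_cast
    constructor <;> linarith

/-- Weyl-type bounds for the number `N_0(a,b)` of zeros of
`p_0(k) = 2 ∑_h tan(k ℓ_h / 2)` in the interval `(a,b)`, for incommensurate
edge lengths: `(b-a)(∑_h ℓ_h)/(2π) - d - 1 ≤ N_0(a,b) ≤
(b-a)(∑_h ℓ_h)/(2π) + d + 1`. -/
theorem p0_zero_count (d : ℕ) (hd : 1 ≤ d) (ℓ : Fin d → ℝ)
    (hℓ : ∀ h, 0 < ℓ h)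
    (hirr : ∀ h h', h ≠ h' → Irrational (ℓ h / ℓ h'))
    (a b : ℝ) (ha : 0 ≤ a) (hab : a < b) (Z : Set ℝ)
    (hZ : Z = {k : ℝ | k ∈ Set.Ioo a b ∧
      (∀ h, Real.cos (k * ℓ h / 2) ≠ 0) ∧
      ∑ h : Fin d, Real.tan (k * ℓ h / 2) = 0}) :
    Z.Finite ∧
    (b - a) * (∑ h : Fin d, ℓ h) / (2 * Real.pi) - d - 1 ≤ (Z.ncard : ℝ) ∧
    (Z.ncard : ℝ) ≤ (b - a) * (∑ h : Fin d, ℓ h) / (2 * Real.pi) + d + 1 := by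
  classical
  have hpi := Real.pi_pos
  choose P hP hlo hhi using fun h => aux_count (hℓ h) hab
  -- distinct edges have no common pole
  have hdisj : ∀ h h', h ≠ h' → ∀ k, Real.cos (k * ℓ h / 2) = 0 →
      Real.cos (k * ℓ h' / 2) ≠ 0 := by
    intro h h' hne k h1 h2
    obtain ⟨m, hm⟩ := Real.cos_eq_zero_iff.1 h1
    obtain ⟨n, hn⟩ := Real.cos_eq_zero_iff.1 h2
    have odd0 : ∀ j : ℤ, (2 * (j : ℝ) + 1) ≠ 0 := by
      intro j hj
      have : (2 * j + 1 : ℤ) = 0 := by exact_mod_cast hj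
      omega
    have hk : k ≠ 0 := by
      rintro rfl
      have := mul_ne_zero (odd0 m) hpi.ne'
      apply this
      linarith
    apply hirr h h' hne
    refine ⟨(2 * (m : ℚ) + 1) / (2 * (n : ℚ) + 1), ?_⟩
    push_cast
    have hl' := (hℓ h').ne'
    rw [div_eq_div_iff (odd0 n) hl']
    have e1 : k * ℓ h = (2 * m + 1) * Real.pi := by linarith
    have e2 : k * ℓ h' = (2 * n + 1) * Real.pi := by linarith
    apply mul_left_cancel₀ hk
    apply mul_right_cancel₀ hpi.ne'
    linear_combination (2 * (m : ℝ) + 1) * Real.pi * e2 - (2 * (n : ℝ) + 1) * Real.pi * e1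
  set Q : Finset ℝ := Finset.univ.biUnion P with hQ
  have memQ : ∀ k, k ∈ Q ↔ k ∈ Set.Ioo a b ∧ ∃ h, Real.cos (k * ℓ h / 2) = 0 := by
    intro k
    simp only [hQ, Finset.mem_biUnion, Finset.mem_univ, true_and, hP]
    exact exists_and_left
  have cardQ : (Q.card : ℝ) = ∑ h, ((P h).card : ℝ) := by
    rw [hQ, Finset.card_biUnion]
    · push_cast; rfl
    · intro h _ h' _ hne
      rw [Function.onFun, Finset.disjoint_left]
      intro k hk hk'
      exact hdisj h h' hne k ((hP h k).1 hk).2 ((hP h' k).1 hk').2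
  have hsum : ∑ h, ((b - a) * ℓ h / (2 * Real.pi)) =
      (b - a) * (∑ h : Fin d, ℓ h) / (2 * Real.pi) := by
    rw [Finset.mul_sum, Finset.sum_div]
  have Qlo : (b - a) * (∑ h : Fin d, ℓ h) / (2 * Real.pi) - d ≤ Q.card := by
    rw [cardQ, ← hsum]
    have := Finset.sum_le_sum (fun h (_ : h ∈ (Finset.univ : Finset (Fin d))) => hlo h)
    simpa [Finset.sum_sub_distrib] using this
  have Qhi : (Q.card : ℝ) ≤ (b - a) * (∑ h : Fin d, ℓ h) / (2 * Real.pi) + d := by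
    rw [cardQ, ← hsum]
    have := Finset.sum_le_sum (fun h (_ : h ∈ (Finset.univ : Finset (Fin d))) => hhi h)
    simpa [Finset.sum_add_distrib] using this
  -- a pole between two zeros
  have sepZ : ∀ x ∈ Z, ∀ y ∈ Z, x < y → ∃ z ∈ Q, x < z ∧ z < y := by
    intro x hx y hy hxy
    rw [hZ] at hx hy
    obtain ⟨hxI, hxc, hx0⟩ := hx
    obtain ⟨hyI, hyc, hy0⟩ := hy
    by_contra hcon
    push Not at hcon
    have hne : ∀ h, ∀ z ∈ Set.Icc x y, Real.cos (z * ℓ h / 2) ≠ 0 := by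
      intro h z hz hc
      rcases hz.1.eq_or_lt with rfl | h1
      · exact hxc h hc
      rcases hz.2.eq_or_lt with rfl | h2
      · exact hyc h hc
      have := hcon z ((memQ z).2 ⟨⟨hxI.1.trans h1, h2.trans hyI.2⟩, h, hc⟩) h1
      linarith
    have hlt : ∑ h : Fin d, Real.tan (x * ℓ h / 2) < ∑ h : Fin d, Real.tan (y * ℓ h / 2) := by
      apply Finset.sum_lt_sum_of_nonempty
      · exact ⟨⟨0, hd⟩, Finset.mem_univ _⟩
      · intro h _
        have hl := hℓ h
        apply aux_tan_lt
        · have := mul_lt_mul_of_pos_right hxy hl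
          linarith
        · intro t ht
          have e : t = (2 * t / ℓ h) * ℓ h / 2 := by field_simp
          rw [e]
          apply hne h
          constructor
          · rw [le_div_iff₀ hl]; linarith [ht.1]
          · rw [div_le_iff₀ hl]; linarith [ht.2]
    linarith
  -- a zero between two consecutive poles
  have sepQ : ∀ x ∈ Q, ∀ y ∈ Q, x < y → (∀ z ∈ Q, z ∉ Set.Ioo x y) →
      ∃ z ∈ Z, x < z ∧ z < y := by
    intro x hx y hy hxy hno
    obtain ⟨hxI, i, hi⟩ := (memQ x).1 hx
    obtain ⟨hyI, j, hj⟩ := (memQ y).1 hy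
    have hne : ∀ z ∈ Set.Ioo x y, ∀ h, Real.cos (z * ℓ h / 2) ≠ 0 := by
      intro z hz h hc
      exact hno z ((memQ z).2 ⟨⟨hxI.1.trans hz.1, hz.2.trans hyI.2⟩, h, hc⟩) hz
    have hcont : ∀ h k, Real.cos (k * ℓ h / 2) ≠ 0 →
        ContinuousAt (fun k => Real.tan (k * ℓ h / 2)) k := by
      intro h k hk
      exact ContinuousAt.comp (f := fun k => k * ℓ h / 2) (Real.continuousAt_tan.2 hk)
        (by fun_prop)
    have hsplit : ∀ i : Fin d, (fun k => ∑ h : Fin d, Real.tan (k * ℓ h / 2)) =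
        fun k => Real.tan (k * ℓ i / 2) + ∑ h ∈ Finset.univ.erase i, Real.tan (k * ℓ h / 2) := by
      intro i
      funext k
      exact (Finset.add_sum_erase _ _ (Finset.mem_univ i)).symm
    have hrest : ∀ (i : Fin d) (x : ℝ), Real.cos (x * ℓ i / 2) = 0 →
        ContinuousAt (fun k => ∑ h ∈ Finset.univ.erase i, Real.tan (k * ℓ h / 2)) x := by
      intro i x hi
      apply tendsto_finsetSum
      intro h hh
      exact hcont h x (hdisj i h (Finset.ne_of_mem_erase hh).symm x hi)
    have hbot : Filter.Tendsto (fun k => ∑ h : Fin d, Real.tan (k * ℓ h / 2))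
        (nhdsWithin x (Set.Ioi x)) Filter.atBot := by
      rw [hsplit i]
      exact (aux_right (hℓ i) hi).atBot_add ((hrest i x hi).tendsto.mono_left nhdsWithin_le_nhds)
    have htop : Filter.Tendsto (fun k => ∑ h : Fin d, Real.tan (k * ℓ h / 2))
        (nhdsWithin y (Set.Iio y)) Filter.atTop := by
      rw [hsplit j]
      exact (aux_left (hℓ j) hj).atTop_add ((hrest j y hj).tendsto.mono_left nhdsWithin_le_nhds)
    have hIVT := isPreconnected_Ioo.intermediate_value_Iii (s := Set.Ioo x y)
      (l₁ := nhdsWithin x (Set.Ioi x)) (l₂ := nhdsWithin y (Set.Iio y))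
      (Filter.le_principal_iff.2 (Ioo_mem_nhdsGT hxy))
      (Filter.le_principal_iff.2 (Ioo_mem_nhdsLT hxy))
      (f := fun k => ∑ h : Fin d, Real.tan (k * ℓ h / 2))
      (fun k hk => ContinuousAt.continuousWithinAt
        (tendsto_finsetSum _ fun h _ => hcont h k (hne k hk h))) hbot htop
    obtain ⟨z, hz, hz0⟩ := hIVT (Set.mem_univ (0 : ℝ))
    refine ⟨z, ?_, hz.1, hz.2⟩
    rw [hZ]
    exact ⟨⟨hxI.1.trans hz.1, hz.2.trans hyI.2⟩, hne z hz, hz0⟩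
  have hbound : ∀ s : Finset ℝ, (s : Set ℝ) ⊆ Z → s.card ≤ Q.card + 1 := by
    intro s hs
    apply Finset.card_le_of_interleaved
    intro x hx y hy hxy _
    exact sepZ x (hs hx) y (hs hy) hxy
  have hfin : Z.Finite := by
    by_contra hinf
    obtain ⟨s, hs, hc⟩ := Set.Infinite.exists_subset_card_eq hinf (Q.card + 2)
    have := hbound s hs
    omega
  have hup : Z.ncard ≤ Q.card + 1 := by
    rw [Set.ncard_eq_toFinset_card Z hfin]
    exact hbound _ (by simp)
  have hlow : Q.card ≤ Z.ncard + 1 := by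
    rw [Set.ncard_eq_toFinset_card Z hfin]
    apply Finset.card_le_of_interleaved
    intro x hx y hy hxy hno
    obtain ⟨z, hz, h⟩ := sepQ x hx y hy hxy hno
    exact ⟨z, hfin.mem_toFinset.2 hz, h⟩
  have hup' : (Z.ncard : ℝ) ≤ Q.card + 1 := by exact_mod_cast hup
  have hlow' : (Q.card : ℝ) ≤ Z.ncard + 1 := by exact_mod_cast hlow
  refine ⟨hfin, ?_, ?_⟩ <;> linarith
end

section
/- Let C_n(ℓ;a) be a circulant graph with 0 < a_1 < … < a_d < n/2 and symmetric edge lengths ℓ_1,…,ℓ_d > 0 such that ℓ_h/ℓ_{h'} is irrational for all h ≠ h'. Fix an integer j with 1 ≤ j ≤ ⌊(n−1)/2⌋ such that 2ja_h is not divisible by n for any h ∈ {1,…,d}. Let 0 ≤ a < b be real numbers and let N_j(a,b) be the number of k ∈ (a,b) such that sin(kℓ_h) ≠ 0 for all h and ∑_{h=1}^d [cos(2πja_h/n)·csc(kℓ_h) − cot(kℓ_h)] = 0. Then this set of zeros is finite and (b−a)·(∑_{h=1}^d ℓ_h)/π − d − 1 ≤ N_j(a,b) ≤ (b−a)·(∑_{h=1}^d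 ℓ_h)/π + d + 1. -/
open Finset

/-- The single term of `p_j`. -/
noncomputable def tm (c l x : ℝ) : ℝ :=
  c * (1 / Real.sin (x * l)) - Real.cos (x * l) / Real.sin (x * l)

lemma tm_neg (c l x : ℝ) : tm c l (-x) = - tm c l x := by
  simp only [tm, neg_mul, Real.sin_neg, Real.cos_neg, div_eq_mul_inv, inv_neg]
  ring

lemma tm_hasDerivAt (c l x : ℝ) (hx : Real.sin (x * l) ≠ 0) :
    HasDerivAt (tm c l) (l * (1 - c * Real.cos (x * l)) / Real.sin (x * l) ^ 2) x := by
  have h0 : HasDerivAt (fun y : ℝ => y * l) l x := by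
    simpa using (hasDerivAt_id x).mul_const l
  have hs := h0.sin
  have hc := h0.cos
  have h1 : HasDerivAt (fun y : ℝ => (c - Real.cos (y * l)) / Real.sin (y * l)) _ x :=
    ((hasDerivAt_const x c).sub hc).div hs hx
  have he : tm c l = (fun y : ℝ => (c - Real.cos (y * l)) / Real.sin (y * l)) := by
    funext y
    simp only [tm]
    ring
  rw [he]
  refine h1.congr_deriv ?_
  have := Real.sin_sq_add_cos_sq (x * l)
  congr 1
  simp only [Pi.sub_apply]
  linear_combination l * this

lemma tm_strictMonoOn (c l u v : ℝ) (hl : 0 < l) (hc : |c| < 1)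
    (h : ∀ x ∈ Set.Icc u v, Real.sin (x * l) ≠ 0) : StrictMonoOn (tm c l) (Set.Icc u v) := by
  refine strictMonoOn_of_deriv_pos (convex_Icc u v)
    (fun x hx => (tm_hasDerivAt c l x (h x hx)).continuousAt.continuousWithinAt) ?_
  intro x hx
  have hx' := h x (interior_subset hx)
  rw [(tm_hasDerivAt c l x hx').deriv]
  have h1 : |c * Real.cos (x * l)| < 1 := by
    rw [abs_mul]
    have := Real.abs_cos_le_one (x * l)
    nlinarith [abs_nonneg c, abs_nonneg (Real.cos (x * l))]
  have h2 := (abs_lt.1 h1).2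
  have : 0 < 1 - c * Real.cos (x * l) := by linarith
  positivity

open Filter Topology in
lemma tm_tendsto_right (c l p : ℝ) (hl : 0 < l) (hc : |c| < 1) (hp : Real.sin (p * l) = 0) :
    Tendsto (tm c l) (𝓝[>] p) atBot := by
  set e := Real.cos (p * l) with he
  have hee : e * e = 1 := by
    have := Real.sin_sq_add_cos_sq (p * l)
    rw [hp] at this
    nlinarith
  have hce : c * e - 1 < 0 := by
    have h1 : |c * e| < 1 := by
      rw [abs_mul]
      have := Real.abs_cos_le_one (p * l)
      nlinarith [abs_nonneg c, abs_nonneg e]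
    have := (abs_lt.1 h1).2
    linarith
  have hden : Tendsto (fun x => e * Real.sin (x * l)) (𝓝[>] p) (𝓝[>] 0) := by
    refine tendsto_nhdsWithin_iff.2 ⟨?_, ?_⟩
    · have : Continuous (fun x => e * Real.sin (x * l)) := by fun_prop
      have h := (this.tendsto p).mono_left (nhdsWithin_le_nhds (s := Set.Ioi p))
      simpa [hp] using h
    · have : ∀ᶠ x in 𝓝[>] p, x ∈ Set.Ioo p (p + Real.pi / l) :=
        Ioo_mem_nhdsGT (by have := Real.pi_pos; have : 0 < Real.pi / l := by positivity
                           linarith)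
      filter_upwards [this] with x hx
      have e1 : x * l = p * l + (x - p) * l := by ring
      rw [Set.mem_Ioi, e1, Real.sin_add, hp, ← he, zero_mul, zero_add, ← mul_assoc, hee, one_mul]
      apply Real.sin_pos_of_pos_of_lt_pi
      · have := hx.1
        exact mul_pos (by linarith) hl
      · have := hx.2
        have h3 : x - p < Real.pi / l := by linarith
        exact (lt_div_iff₀ hl).1 h3
  have hnum : Tendsto (fun x => e * (c - Real.cos (x * l))) (𝓝[>] p) (𝓝 (c * e - 1)) := by
    have : Continuous (fun x => e * (c - Real.cos (x * l))) := by fun_prop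
    have h := (this.tendsto p).mono_left (nhdsWithin_le_nhds (s := Set.Ioi p))
    have e2 : e * (c - Real.cos (p * l)) = c * e - 1 := by
      rw [← he]; linear_combination -hee
    rwa [e2] at h
  have h := hnum.neg_mul_atTop hce (tendsto_inv_nhdsGT_zero.comp hden)
  refine h.congr ?_
  intro x
  have hne : e ≠ 0 := by
    intro h0; rw [h0] at hee; norm_num at hee
  simp only [Function.comp, tm, mul_inv]
  field_simp

lemma interlace (S : Set ℝ) (T : Finset ℝ)
    (h : ∀ s ∈ S, ∀ s' ∈ S, s < s' → ∃ t ∈ T, s < t ∧ t < s') :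
    S.Finite ∧ S.ncard ≤ T.card + 1 := by
  classical
  let g : ℝ → ℕ := fun s => (T.filter (fun t => t < s)).card
  have hlt : ∀ s ∈ S, ∀ s' ∈ S, s < s' → g s < g s' := by
    intro s hs s' hs' hss
    obtain ⟨t, ht, h1, h2⟩ := h s hs s' hs' hss
    apply Finset.card_lt_card
    rw [Finset.ssubset_iff_of_subset]
    · exact ⟨t, by simp [ht, h2], by simp [h1.le]⟩
    · intro x hx
      simp only [Finset.mem_filter] at hx ⊢
      exact ⟨hx.1, hx.2.trans hss⟩
  have hinj : Set.InjOn g S := by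
    intro s hs s' hs' he
    rcases lt_trichotomy s s' with h1 | h1 | h1
    · exact absurd he (hlt s hs s' hs' h1).ne
    · exact h1
    · exact absurd he (hlt s' hs' s hs h1).ne'
  have hmaps : Set.MapsTo g S (Finset.range (T.card + 1) : Set ℕ) := by
    intro s _
    simp only [Finset.coe_range, Set.mem_Iio]
    exact Nat.lt_succ_of_le (Finset.card_filter_le _ _)
  refine ⟨Set.Finite.of_injOn hmaps hinj (Finset.finite_toSet _), ?_⟩
  have := Set.ncard_le_ncard_of_injOn g hmaps hinj (Finset.finite_toSet _)
  rwa [Set.ncard_coe_finset, Finset.card_range] at this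

/-- The poles `mπ/l` in `(α,β)`. -/
noncomputable def poles (α β l : ℝ) : Finset ℝ :=
  (Finset.Ioo ⌊α * l / Real.pi⌋ ⌈β * l / Real.pi⌉).image (fun m : ℤ => (m : ℝ) * Real.pi / l)

lemma mem_poles (α β l : ℝ) (hl : 0 < l) (x : ℝ) :
    x ∈ poles α β l ↔ x ∈ Set.Ioo α β ∧ Real.sin (x * l) = 0 := by
  have hpi := Real.pi_pos
  simp only [poles, Finset.mem_image, Finset.mem_Ioo, Int.floor_lt, Int.lt_ceil, Set.mem_Ioo,
    Real.sin_eq_zero_iff]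
  have key : ∀ m : ℤ, (α * l / Real.pi < m ↔ α < m * Real.pi / l) ∧
      (m < β * l / Real.pi ↔ m * Real.pi / l < β) := by
    intro m
    rw [div_lt_iff₀ hpi, lt_div_iff₀ hl, lt_div_iff₀ hpi, div_lt_iff₀ hl]
    exact ⟨Iff.rfl, Iff.rfl⟩
  constructor
  · rintro ⟨m, ⟨h1, h2⟩, rfl⟩
    refine ⟨⟨(key m).1.1 h1, (key m).2.1 h2⟩, m, ?_⟩
    field_simp
  · rintro ⟨⟨h1, h2⟩, m, hm⟩
    have hx : (m : ℝ) * Real.pi / l = x := by rw [hm]; field_simp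
    refine ⟨m, ⟨(key m).1.2 (hx ▸ h1), (key m).2.2 (hx ▸ h2)⟩, hx⟩

lemma card_poles (α β l : ℝ) (hl : 0 < l) (h : α < β) :
    (β - α) * l / Real.pi - 1 ≤ ((poles α β l).card : ℝ) ∧
    ((poles α β l).card : ℝ) ≤ (β - α) * l / Real.pi + 1 := by
  have hpi := Real.pi_pos
  have hcard : (poles α β l).card = (Finset.Ioo ⌊α * l / Real.pi⌋ ⌈β * l / Real.pi⌉).card := by
    apply Finset.card_image_of_injective
    intro m m' hm
    simp only at hm
    field_simp at hm
    exact_mod_cast hm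
  have hxy : α * l / Real.pi < β * l / Real.pi := by gcongr
  have e : (β - α) * l / Real.pi = β * l / Real.pi - α * l / Real.pi := by ring
  rw [hcard, Int.card_Ioo, e]
  set x := α * l / Real.pi
  set y := β * l / Real.pi
  have h1 := Int.floor_le x
  have h2 := Int.lt_floor_add_one x
  have h3 := Int.le_ceil y
  have h4 := Int.ceil_lt_add_one y
  have h5 : ⌊x⌋ < ⌈y⌉ := by
    have : (⌊x⌋ : ℝ) < ⌈y⌉ := by linarith
    exact_mod_cast this
  have h6 : (((⌈y⌉ - ⌊x⌋ - 1).toNat : ℤ) : ℝ) = ((⌈y⌉ - ⌊x⌋ - 1 : ℤ) : ℝ) := by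
    rw [Int.toNat_of_nonneg (by omega)]
  rw [Int.cast_natCast] at h6
  rw [h6]
  push_cast
  constructor <;> linarith

open Filter Topology in
lemma sum_tendsto_right {d : ℕ} (c ℓ : Fin d → ℝ) (hℓ : ∀ h, 0 < ℓ h) (hc : ∀ h, |c h| < 1)
    (p : ℝ) (h0 : Fin d) (hp : Real.sin (p * ℓ h0) = 0)
    (hp' : ∀ h, h ≠ h0 → Real.sin (p * ℓ h) ≠ 0) :
    Tendsto (fun x => ∑ h, tm (c h) (ℓ h) x) (𝓝[>] p) atBot := by
  have h1 := tm_tendsto_right (c h0) (ℓ h0) p (hℓ h0) (hc h0) hp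
  have h2 : Tendsto (fun x => ∑ h ∈ Finset.univ.erase h0, tm (c h) (ℓ h) x) (𝓝[>] p)
      (𝓝 (∑ h ∈ Finset.univ.erase h0, tm (c h) (ℓ h) p)) := by
    apply tendsto_finsetSum
    intro h hh
    exact (tm_hasDerivAt _ _ _ (hp' h (Finset.ne_of_mem_erase hh))).continuousAt.tendsto.mono_left
      nhdsWithin_le_nhds
  refine (h1.atBot_add h2).congr ?_
  intro x
  exact Finset.add_sum_erase _ (fun h => tm (c h) (ℓ h) x) (Finset.mem_univ h0)

open Filter Topology in
lemma sum_tendsto_left {d : ℕ} (c ℓ : Fin d → ℝ) (hℓ : ∀ h, 0 < ℓ h) (hc : ∀ h, |c h| < 1)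
    (p : ℝ) (h0 : Fin d) (hp : Real.sin (p * ℓ h0) = 0)
    (hp' : ∀ h, h ≠ h0 → Real.sin (p * ℓ h) ≠ 0) :
    Tendsto (fun x => ∑ h, tm (c h) (ℓ h) x) (𝓝[<] p) atTop := by
  have h1 := sum_tendsto_right c ℓ hℓ hc (-p) h0 (by rw [neg_mul, Real.sin_neg, hp, neg_zero])
    (fun h hh => by rw [neg_mul, Real.sin_neg, neg_ne_zero]; exact hp' h hh)
  have h2 : Tendsto (fun x : ℝ => -x) (𝓝[<] p) (𝓝[>] (-p)) := tendsto_neg_nhdsLT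
  refine (tendsto_neg_atBot_atTop.comp (h1.comp h2)).congr ?_
  intro x
  simp [Function.comp, tm_neg]

/-- Weyl-type bounds for the number `N_j(a,b)` of zeros of
`p_j(k) = 2 ∑_h [cos(2πja_h/n) csc(k ℓ_h) - cot(k ℓ_h)]` in `(a,b)`, for
incommensurate symmetric edge lengths and a representation index `j` with
`1 ≤ j ≤ ⌊(n-1)/2⌋` such that `n ∤ 2 j a_h` for all `h`:
`(b-a)(∑_h ℓ_h)/π - d - 1 ≤ N_j(a,b) ≤ (b-a)(∑_h ℓ_h)/π + d + 1`. -/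
theorem pj_zero_count (n d : ℕ) (a : Fin d → ℕ) (hd : 1 ≤ d)
    (hpos : ∀ h, 0 < a h) (hmono : StrictMono a) (hlt : ∀ h, 2 * a h < n)
    (ℓ : Fin d → ℝ) (hℓ : ∀ h, 0 < ℓ h)
    (hirr : ∀ h h', h ≠ h' → Irrational (ℓ h / ℓ h'))
    (j : ℕ) (hj1 : 1 ≤ j) (hj2 : j ≤ (n - 1) / 2)
    (hjn : ∀ h, ¬ (n ∣ 2 * j * a h))
    (α β : ℝ) (hα : 0 ≤ α) (hαβ : α < β) (Z : Set ℝ)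
    (hZ : Z = {k : ℝ | k ∈ Set.Ioo α β ∧
      (∀ h, Real.sin (k * ℓ h) ≠ 0) ∧
      ∑ h : Fin d, (Real.cos (2 * Real.pi * j * a h / n) * (1 / Real.sin (k * ℓ h))
        - Real.cos (k * ℓ h) / Real.sin (k * ℓ h)) = 0}) :
    Z.Finite ∧
    (β - α) * (∑ h : Fin d, ℓ h) / Real.pi - d - 1 ≤ (Z.ncard : ℝ) ∧
    (Z.ncard : ℝ) ≤ (β - α) * (∑ h : Fin d, ℓ h) / Real.pi + d + 1 := by
  classical
  have hn : (0:ℝ) < n := by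
    have := hlt ⟨0, hd⟩
    exact_mod_cast (by omega : 0 < n)
  have hpi := Real.pi_pos
  obtain ⟨c, hcdef⟩ : ∃ c : Fin d → ℝ, c = fun h => Real.cos (2 * Real.pi * j * a h / n) :=
    ⟨_, rfl⟩
  have hc : ∀ h, |c h| < 1 := by
    intro h
    rw [← sq_lt_one_iff_abs_lt_one, hcdef]
    have h1 := Real.sin_sq_add_cos_sq (2 * Real.pi * j * a h / n)
    have h2 : Real.sin (2 * Real.pi * j * a h / n) ≠ 0 := by
      intro h0
      obtain ⟨m, hm⟩ := Real.sin_eq_zero_iff.1 h0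
      apply hjn h
      have h3 : (m : ℝ) * n = 2 * j * a h := by
        field_simp at hm
        linarith
      have h4 : m * (n : ℤ) = ((2 * j * a h : ℕ) : ℤ) := by
        push_cast
        exact_mod_cast h3
      exact Int.natCast_dvd_natCast.1 ⟨m, by rw [← h4]; ring⟩
    have h3 : 0 < Real.sin (2 * Real.pi * j * a h / n) ^ 2 := by positivity
    simp only
    linarith
  have hZ' : ∀ k, k ∈ Z ↔ k ∈ Set.Ioo α β ∧ (∀ h, Real.sin (k * ℓ h) ≠ 0) ∧
      ∑ h, tm (c h) (ℓ h) k = 0 := by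
    intro k
    rw [hZ, hcdef]
    rfl
  clear hZ hcdef
  have huniq : ∀ p, 0 < p → ∀ h h', Real.sin (p * ℓ h) = 0 → Real.sin (p * ℓ h') = 0 →
      h = h' := by
    intro p hp h h' e1 e2
    by_contra hne
    obtain ⟨m, hm⟩ := Real.sin_eq_zero_iff.1 e1
    obtain ⟨m', hm'⟩ := Real.sin_eq_zero_iff.1 e2
    apply hirr h h' hne
    refine ⟨(m : ℚ) / m', ?_⟩
    push_cast
    have l1 := hℓ h
    have l2 := hℓ h'
    have hm0 : (m' : ℝ) ≠ 0 := by
      intro h0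
      rw [h0, zero_mul] at hm'
      have := mul_pos hp l2
      linarith
    have : ℓ h / ℓ h' = (p * ℓ h) / (p * ℓ h') := by field_simp
    rw [this, ← hm, ← hm']
    field_simp
  let P : Finset ℝ := Finset.univ.biUnion (fun h => poles α β (ℓ h))
  have memP : ∀ x, x ∈ P ↔ x ∈ Set.Ioo α β ∧ ∃ h, Real.sin (x * ℓ h) = 0 := by
    intro x
    simp only [P, Finset.mem_biUnion, Finset.mem_univ, true_and]
    constructor
    · rintro ⟨h, hh⟩
      have := (mem_poles α β (ℓ h) (hℓ h) x).1 hh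
      exact ⟨this.1, h, this.2⟩
    · rintro ⟨h1, h, hh⟩
      exact ⟨h, (mem_poles α β (ℓ h) (hℓ h) x).2 ⟨h1, hh⟩⟩
  have cardP : P.card = ∑ h, (poles α β (ℓ h)).card := by
    apply Finset.card_biUnion
    intro h _ h' _ hne
    rw [Function.onFun, Finset.disjoint_left]
    intro x h1 h2
    have h1 := (mem_poles α β (ℓ h) (hℓ h) x).1 h1
    have h2 := (mem_poles α β (ℓ h') (hℓ h') x).1 h2
    exact hne (huniq x (lt_of_le_of_lt hα h1.1.1) h h' h1.2 h2.2)
  have hsum : (β - α) * (∑ h : Fin d, ℓ h) / Real.pi = ∑ h, (β - α) * ℓ h / Real.pi := by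
    rw [Finset.mul_sum, Finset.sum_div]
  have lowP : (β - α) * (∑ h : Fin d, ℓ h) / Real.pi - d ≤ (P.card : ℝ) := by
    rw [cardP, hsum]
    push_cast
    have := Finset.sum_le_sum (s := Finset.univ)
      (fun h _ => (card_poles α β (ℓ h) (hℓ h) hαβ).1)
    simpa [Finset.sum_sub_distrib] using this
  have upP : (P.card : ℝ) ≤ (β - α) * (∑ h : Fin d, ℓ h) / Real.pi + d := by
    rw [cardP, hsum]
    push_cast
    have := Finset.sum_le_sum (s := Finset.univ)
      (fun h _ => (card_poles α β (ℓ h) (hℓ h) hαβ).2)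
    simpa [Finset.sum_add_distrib] using this
  have up := interlace Z P (by
    intro s hs s' hs' hss
    by_contra! hcon
    rw [hZ'] at hs hs'
    have hno : ∀ x ∈ Set.Icc s s', ∀ h, Real.sin (x * ℓ h) ≠ 0 := by
      intro x hx h h0
      rcases hx.1.eq_or_lt with e | e
      · exact hs.2.1 h (e ▸ h0)
      rcases hx.2.eq_or_lt with e' | e'
      · exact hs'.2.1 h (e' ▸ h0)
      have := hcon x ((memP x).2 ⟨⟨hs.1.1.trans e, e'.trans hs'.1.2⟩, h, h0⟩) e
      linarith
    have : ∑ h, tm (c h) (ℓ h) s < ∑ h, tm (c h) (ℓ h) s' := by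
      apply Finset.sum_lt_sum_of_nonempty ⟨⟨0, hd⟩, Finset.mem_univ _⟩
      intro h _
      exact tm_strictMonoOn (c h) (ℓ h) s s' (hℓ h) (hc h) (fun x hx => hno x hx h)
        (Set.left_mem_Icc.2 hss.le) (Set.right_mem_Icc.2 hss.le) hss
    rw [hs.2.2, hs'.2.2] at this
    exact lt_irrefl _ this)
  have low := interlace (P : Set ℝ) up.1.toFinset (by
    intro p hp p' hp' hpp
    obtain ⟨q, hq, hqmin⟩ := Finset.exists_min_image (P.filter (fun x => p < x)) id
      ⟨p', by simp only [Finset.mem_filter]; exact ⟨hp', hpp⟩⟩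
    simp only [Finset.mem_filter, id] at hq hqmin
    have hqp' : q ≤ p' := hqmin p' ⟨hp', hpp⟩
    have hp1 := (memP p).1 hp
    have hq1 := (memP q).1 hq.1
    obtain ⟨hpI, h1, hp0⟩ := hp1
    obtain ⟨hqI, h2, hq0⟩ := hq1
    have hno : ∀ x, p < x → x < q → ∀ h, Real.sin (x * ℓ h) ≠ 0 := by
      intro x hx1 hx2 h h0
      have := hqmin x ⟨(memP x).2 ⟨⟨hpI.1.trans hx1, hx2.trans hqI.2⟩, h, h0⟩, hx1⟩
      linarith
    have t1 := sum_tendsto_right c ℓ hℓ hc p h1 hp0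
      (fun h hh h0 => hh (huniq p (lt_of_le_of_lt hα hpI.1) h h1 h0 hp0))
    have t2 := sum_tendsto_left c ℓ hℓ hc q h2 hq0
      (fun h hh h0 => hh (huniq q (lt_of_le_of_lt hα hqI.1) h h2 h0 hq0))
    have hmid1 : p < (p + q) / 2 := by linarith [hq.2]
    have hmid2 : (p + q) / 2 < q := by linarith [hq.2]
    obtain ⟨u, hu0, hu⟩ := ((t1.eventually (Filter.eventually_le_atBot 0)).and
      (Ioo_mem_nhdsGT hmid1)).exists
    obtain ⟨v, hv0, hv⟩ := ((t2.eventually (Filter.eventually_ge_atTop 0)).and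
      (Ioo_mem_nhdsLT hmid2)).exists
    have huv : u ≤ v := (hu.2.trans hv.1).le
    have hcont : ContinuousOn (fun x => ∑ h, tm (c h) (ℓ h) x) (Set.Icc u v) := by
      apply continuousOn_finsetSum
      intro h _ x hx
      exact (tm_hasDerivAt _ _ _ (hno x (lt_of_lt_of_le hu.1 hx.1)
        (lt_of_le_of_lt hx.2 hv.2) h)).continuousAt.continuousWithinAt
    obtain ⟨z, hz, hz0⟩ := intermediate_value_Icc huv hcont ⟨hu0, hv0⟩
    have hz1 : p < z := lt_of_lt_of_le hu.1 hz.1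
    have hz2 : z < q := lt_of_le_of_lt hz.2 hv.2
    refine ⟨z, ?_, hz1, lt_of_lt_of_le hz2 hqp'⟩
    rw [Set.Finite.mem_toFinset, hZ']
    exact ⟨⟨hpI.1.trans hz1, hz2.trans hqI.2⟩, hno z hz1 hz2, hz0⟩)
  have low2 := low.2
  rw [Set.ncard_coe_finset, ← Set.ncard_eq_toFinset_card Z up.1] at low2
  have low3 : (P.card : ℝ) ≤ Z.ncard + 1 := by exact_mod_cast low2
  have up3 : (Z.ncard : ℝ) ≤ P.card + 1 := by exact_mod_cast up.2
  exact ⟨up.1, by linarith, by linarith⟩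
end

section
/- Let θ ∈ ℝ and let k ∈ ℝ with k not an integer multiple of π. Then the family of terms ((−1)^m cos θ − 1)·(1/(k+πm) − mπ/(1+m²π²)), indexed by m ∈ ℤ, is absolutely summable, and ∑_{m∈ℤ} ((−1)^m cos θ − 1)·(1/(k+πm) − mπ/(1+m²π²)) = cos θ · csc k − cot k. -/
lemma pe_congr {ι : Type} {f g : ι → ℝ} {a : ℝ} (h : HasSum f a) (hfg : ∀ i, g i = f i) :
    HasSum g a := by
  rw [funext hfg]; exact h

open Filter Topology in
lemma pe_sum (k : ℝ) (hk : ∀ m : ℤ, k ≠ m * Real.pi) (c : ℤ → ℝ) (hc : ∀ m, c (-m) = - c m)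
    (hs : Summable (fun m : ℤ => 1 / (k + Real.pi * m) - c m)) :
    HasSum (fun m : ℤ => 1 / (k + Real.pi * m) - c m) (Real.cos k / Real.sin k) := by
  have hpi := Real.pi_ne_zero
  have hx : ((k / Real.pi : ℝ) : ℂ) ∈ Complex.integerComplement := by
    rw [Complex.mem_integerComplement_iff]
    rintro ⟨n, hn⟩
    have h1 : (n : ℝ) = k / Real.pi := by exact_mod_cast hn
    apply hk n
    rw [h1]; field_simp
  have hk0 : k ≠ 0 := by simpa using hk 0
  have h1 := (summable_cotTerm hx).hasSum
  have h2 := cot_series_rep' hx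
  have h3 : HasSum (fun n : ℕ => 1 / (k / Real.pi - (n + 1)) + 1 / (k / Real.pi + (n + 1)))
      (Real.pi * Real.cot k - Real.pi / k) := by
    rw [← Complex.hasSum_ofReal]
    have e : ((Real.pi * Real.cot k - Real.pi / k : ℝ) : ℂ)
        = ∑' n : ℕ, cotTerm ((k / Real.pi : ℝ) : ℂ) n := by
      unfold cotTerm
      rw [← h2]
      have : (Real.pi : ℂ) * ((k / Real.pi : ℝ) : ℂ) = (k : ℂ) := by
        rw [← Complex.ofReal_mul]; congr 1; field_simp
      rw [this]
      push_cast
      simp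
    rw [e]
    convert h1 using 2 with n
    unfold cotTerm
    push_cast
    rfl
  have h4 := hs.hasSum.nat_add_neg
  have h5 := (hasSum_nat_add_iff' 1).mpr h4
  have h6 := h3.mul_left (1 / Real.pi)
  have c0 : c 0 = 0 := by have := hc 0; simp at this; linarith
  have h7 := h5.unique (by
    refine pe_congr h6 ?_
    intro n
    rw [hc]
    push_cast
    have e1 : k / Real.pi - (n + 1) = (k - Real.pi * (n + 1)) / Real.pi := by field_simp
    have e2 : k / Real.pi + (n + 1) = (k + Real.pi * (n + 1)) / Real.pi := by field_simp
    rw [e1, e2, one_div_div, one_div_div, mul_add (1 / Real.pi), mul_neg, ← sub_eq_add_neg k]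
    have (y : ℝ) : 1 / Real.pi * (Real.pi / y) = 1 / y := by
      rw [← mul_div_assoc]; field_simp
    rw [this, this]
    ring)
  simp [c0] at h7
  have h8 : (∑' m : ℤ, (1 / (k + Real.pi * m) - c m)) = Real.cos k / Real.sin k := by
    rw [← Real.cot_eq_cos_div_sin]
    have : Real.pi⁻¹ * (Real.pi * k.cot - Real.pi / k) = k.cot - k⁻¹ := by field_simp
    rw [this] at h7
    simp only [one_div]
    linarith
  rw [← h8]
  exact hs.hasSum

open Filter Asymptotics in
lemma pe_summable (k : ℝ) (hk : ∀ m : ℤ, k ≠ m * Real.pi) :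
    Summable (fun m : ℤ => 1 / (k + Real.pi * m)
      - m * Real.pi / (1 + (m : ℝ) ^ 2 * Real.pi ^ 2)) := by
  have hne : ∀ m : ℤ, k + Real.pi * m ≠ 0 := by
    intro m h
    apply hk (-m); push_cast; linarith
  have hpos : ∀ m : ℤ, 0 < 1 + (m : ℝ) ^ 2 * Real.pi ^ 2 := fun m => by positivity
  have hs : Summable (fun m : ℤ => (2 * (1 + |k|)^2) * (1 / (m : ℝ) ^ 2)) :=
    (Real.summable_one_div_int_pow.mpr (by norm_num)).mul_left _
  refine Summable.of_norm_bounded_eventually hs ?_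
  have hfin : Set.Finite {m : ℤ | |(m : ℝ)| ≤ 1 + |k|} := by
    apply (Set.finite_Icc (-⌈1 + |k|⌉) ⌈1 + |k|⌉).subset
    intro m hm
    have h1 := abs_le.mp (show |(m : ℝ)| ≤ 1 + |k| from hm)
    have h2 := Int.le_ceil (1 + |k|)
    constructor
    · have : ((-⌈1 + |k|⌉ : ℤ) : ℝ) ≤ m := by push_cast; linarith
      exact_mod_cast this
    · have : (m : ℝ) ≤ (⌈1 + |k|⌉ : ℤ) := by linarith
      exact_mod_cast this
  refine hfin.subset ?_
  intro m hm
  by_contra hm2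
  apply hm
  have hm3 : 1 + |k| < |(m : ℝ)| := by simpa using hm2
  have hp := Real.pi_gt_three
  have e : 1 / (k + Real.pi * m) - m * Real.pi / (1 + (m : ℝ) ^ 2 * Real.pi ^ 2)
      = (1 - m * Real.pi * k) / ((k + Real.pi * m) * (1 + (m : ℝ) ^ 2 * Real.pi ^ 2)) := by
    have := hne m
    have := (hpos m).ne'
    field_simp
    ring
  show ‖_‖ ≤ _
  rw [e, Real.norm_eq_abs, abs_div, abs_mul, abs_of_pos (hpos m)]
  have ha : 0 ≤ |k| := abs_nonneg k
  have b1 : |1 - m * Real.pi * k| ≤ 1 + |(m : ℝ)| * Real.pi * |k| := by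
    refine (abs_sub _ _).trans ?_
    rw [abs_mul, abs_mul, abs_of_pos Real.pi_pos, abs_one]
  have b2 : |(m : ℝ)| ≤ |k + Real.pi * m| := by
    have := abs_sub_abs_le_abs_sub (Real.pi * m) (-k)
    rw [abs_neg, abs_mul, abs_of_pos Real.pi_pos, sub_neg_eq_add, add_comm _ k] at this
    nlinarith
  set x := |(m : ℝ)| with hxdef
  have hx2 : (m : ℝ) ^ 2 = x ^ 2 := (sq_abs _).symm
  rw [hx2]
  have hx : 0 < x := by linarith
  have hpx : 1 ≤ x * Real.pi := by nlinarith
  calc |1 - m * Real.pi * k| / (|k + Real.pi * m| * (1 + x ^ 2 * Real.pi ^ 2))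
      ≤ (1 + x * Real.pi * |k|) / (x * (x ^ 2 * Real.pi ^ 2)) := by
        gcongr
        linarith
    _ ≤ (x * Real.pi * (1 + |k|)) / (x * (x ^ 2 * Real.pi ^ 2)) := by
        gcongr
        linarith
    _ = (1 + |k|) / Real.pi * (1 / x ^ 2) := by
        field_simp
    _ ≤ _ := by
        gcongr
        rw [div_le_iff₀ Real.pi_pos]
        nlinarith [mul_nonneg (mul_nonneg ha (by linarith : (0:ℝ) ≤ 1 + |k|)) Real.pi_pos.le]

/-- Pole expansion: for `k` not an integer multiple of `π`, the family
`((-1)^m cos θ - 1)(1/(k + πm) - mπ/(1 + m²π²))`, `m ∈ ℤ`, is (absolutely)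
summable with sum `cos θ csc k - cot k`. -/
theorem pole_expansion (θ k : ℝ) (hk : ∀ m : ℤ, k ≠ m * Real.pi) :
    Summable (fun m : ℤ => ((-1 : ℝ) ^ m * Real.cos θ - 1) *
      (1 / (k + Real.pi * m) - m * Real.pi / (1 + (m : ℝ) ^ 2 * Real.pi ^ 2))) ∧
    ∑' m : ℤ, ((-1 : ℝ) ^ m * Real.cos θ - 1) *
        (1 / (k + Real.pi * m) - m * Real.pi / (1 + (m : ℝ) ^ 2 * Real.pi ^ 2)) =
      Real.cos θ * (1 / Real.sin k) - Real.cos k / Real.sin k := by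
  have hsA := pe_summable k hk
  set c : ℤ → ℝ := fun m => m * Real.pi / (1 + (m : ℝ) ^ 2 * Real.pi ^ 2) with hcdef
  have hc : ∀ m, c (-m) = - c m := by
    intro m; simp only [hcdef]; push_cast; ring
  have hA := pe_sum k hk c hc hsA
  set A : ℤ → ℝ := fun m => 1 / (k + Real.pi * m)
      - m * Real.pi / (1 + (m : ℝ) ^ 2 * Real.pi ^ 2) with hAdef
  have hinj : Function.Injective (fun n : ℤ => 2 * n) := fun a b h => by
    simpa using h
  have hk2 : ∀ m : ℤ, k / 2 ≠ m * Real.pi := by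
    intro m h; apply hk (2 * m); push_cast; linarith
  have e2 : ∀ n : ℤ, 1 / (k / 2 + Real.pi * n) - 2 * c (2 * n) = 2 * A (2 * n) := by
    intro n
    simp only [hAdef, hcdef]
    have : k + Real.pi * ((2 * n : ℤ) : ℝ) = 2 * (k / 2 + Real.pi * n) := by push_cast; ring
    rw [this, one_div, one_div, mul_inv]
    ring
  have hB := pe_sum (k / 2) hk2 (fun n => 2 * c (2 * n))
    (by intro m; rw [mul_neg, hc]; ring)
    (by simp_rw [e2]; exact (hsA.comp_injective hinj).mul_left 2)
  simp_rw [e2] at hB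
  have hE : HasSum (fun m : ℤ => if Even m then 2 * A m else 0)
      (Real.cos (k / 2) / Real.sin (k / 2)) := by
    rw [← hinj.hasSum_iff]
    · convert hB using 2 with n
      simp
    · intro m hm
      rw [if_neg]
      rintro ⟨r, hr⟩
      exact hm ⟨r, by simp only; omega⟩
  have hT := ((hE.sub hA).mul_left (Real.cos θ)).sub hA
  have hS : Real.sin (k / 2) ≠ 0 := by
    rw [Real.sin_ne_zero_iff]
    intro n h; exact hk2 n h.symm
  have hSk : Real.sin k ≠ 0 := by
    rw [Real.sin_ne_zero_iff]
    intro n h; exact hk n h.symm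
  have hcsc : Real.cos (k / 2) / Real.sin (k / 2) - Real.cos k / Real.sin k
      = 1 / Real.sin k := by
    have h := Real.sin_sub k (k / 2)
    rw [sub_half] at h
    field_simp
    linarith
  rw [hcsc] at hT
  have hF : HasSum (fun m : ℤ => ((-1 : ℝ) ^ m * Real.cos θ - 1) * A m)
      (Real.cos θ * (1 / Real.sin k) - Real.cos k / Real.sin k) := by
    refine pe_congr hT ?_
    intro m
    change _ = Real.cos θ * ((if Even m then 2 * A m else 0) - A m) - A m
    split_ifs with h
    · rw [h.neg_one_zpow]; ring
    · rw [(Int.not_even_iff_odd.mp h).neg_one_zpow]; ring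
  exact ⟨hF.summable, hF.tsum_eq⟩
end
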